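/- Let A be a Hopf algebra over a field k, let r ∈ A be a grouplike element, and let δ : A → A be a k-linear map satisfying Δ(δ(a)) = δ(a₍₁₎) ⊗ a₍₂₎ + r a₍₁₎ ⊗ δ(a₍₂₎) for all a ∈ A. Then r S(δ(a)) = − r S(a₍₁₎) S(r) δ(a₍₂₎) S(a₍₃₎) for all a ∈ A, where a₍₁₎ ⊗ a₍₂₎ ⊗ a₍₃₎ denotes (Δ ⊗ id)(Δ(a)). -/

import Mathlib

open TensorProduct

/-!
In the convolution algebra the hypothesis on `δ` is a Leibniz rule: precomposition with `δ` turns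
`α * β` into `(α ∘ δ) * β + (α ∘ (r ·)) * (β ∘ δ)`. For `α = β = ε` this gives `ε ∘ δ = 0`; for
`S * id = 1` it then gives `(S ∘ δ) * id = -((S ∘ (r ·)) * δ)`. Convolving with `S` on the right
isolates `S ∘ δ`. The argument works equally for maps out of another coalgebra, with a coalgebra map
`φ` in place of `id` and a counit-preserving map `ψ` in place of `r ·`.
-/

open Coalgebra HopfAlgebra LinearMap WithConv

section Convolution

variable {R C B : Type*} [CommSemiring R] [AddCommMonoid C] [Module R C]

theorem convMul_convMul_apply [CoalgebraStruct R C] [NonUnitalNonAssocSemiring B] [Module R B]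
    [SMulCommClass R B B] [IsScalarTower R B B] (α β γ : C →ₗ[R] B) (c : C) :
    (toConv α * toConv β * toConv γ) c =
      mul' R B (rTensor B (mul' R B) (map (map α β) γ (rTensor C comul (comul c)))) := by
  simp only [LinearMap.convMul_def, comp_apply, map_rTensor, rTensor_map]

theorem toConv_mulLeft_comp_convMul [CoalgebraStruct R C] [NonUnitalSemiring B] [Module R B]
    [SMulCommClass R B B] [IsScalarTower R B B] (b : B) (α β : C →ₗ[R] B) :
    toConv (mulLeft R b ∘ₗ α) * toConv β =
      toConv (mulLeft R b ∘ₗ (toConv α * toConv β).ofConv) := by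
  ext c
  simp [(ℛ R c).convMul_apply, mul_assoc]

theorem toConv_counit [Coalgebra R C] : toConv (counit : C →ₗ[R] R) = 1 := rfl

theorem toConv_coalgHom_mul_antipode_comp [Coalgebra R C] [Semiring B] [HopfAlgebra R B]
    (φ : C →ₗc[R] B) :
    toConv φ.toLinearMap * toConv (antipode R ∘ₗ φ.toLinearMap) = 1 := by
  have h := convMul_comp_coalgHom_distrib (toConv .id) (toConv (antipode R)) φ
  rw [id_mul_antipode] at h
  ext c
  simpa using congr($h.symm c)

end Convolution

/-- A skew coderivation along `φ` and `ψ`: a map `δ` between coalgebras that satisfies the Leibniz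
rule `Δ(δ c) = δ(c₍₁₎) ⊗ φ(c₍₂₎) + ψ(c₍₁₎) ⊗ δ(c₍₂₎)`. The map `δ` of the theorem is the case
`φ = id`, `ψ = (r ·)`. Here `φ` and `ψ` are merely linear. -/
def IsSkewCoderivation {R C D : Type*} [CommSemiring R] [AddCommMonoid C] [Module R C]
    [CoalgebraStruct R C] [AddCommMonoid D] [Module R D] [CoalgebraStruct R D]
    (φ ψ δ : C →ₗ[R] D) : Prop :=
  ∀ c, comul (R := R) (δ c) = map δ φ (comul c) + map ψ δ (comul c)

namespace IsSkewCoderivation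

theorem convMul_comp {R C D B : Type*} [CommSemiring R] [AddCommMonoid C] [Module R C]
    [CoalgebraStruct R C] [AddCommMonoid D] [Module R D] [CoalgebraStruct R D]
    [NonUnitalNonAssocSemiring B] [Module R B] [SMulCommClass R B B] [IsScalarTower R B B]
    {φ ψ δ : C →ₗ[R] D} (hδ : IsSkewCoderivation φ ψ δ) (α β : D →ₗ[R] B) :
    toConv ((toConv α * toConv β).ofConv ∘ₗ δ) =
      toConv (α ∘ₗ δ) * toConv (β ∘ₗ φ) + toConv (α ∘ₗ ψ) * toConv (β ∘ₗ δ) := by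
  ext c
  simp [hδ c, map_map]

variable {R C : Type*} [CommRing R] [AddCommMonoid C] [Module R C] [Coalgebra R C]

theorem counit_comp_eq_zero {D : Type*} [AddCommMonoid D] [Module R D] [Coalgebra R D]
    {φ ψ δ : C →ₗ[R] D} (hδ : IsSkewCoderivation φ ψ δ)
    (hφ : counit ∘ₗ φ = counit) (hψ : counit ∘ₗ ψ = counit) :
    counit ∘ₗ δ = 0 := by
  have h := hδ.convMul_comp counit counit
  rw [hφ, hψ, toConv_counit, toConv_counit, mul_one, mul_one, one_mul, ← toConv_counit] at h
  exact toConv_injective (left_eq_add.mp h)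

variable {A : Type*} [Ring A] [HopfAlgebra R A]

theorem antipode_comp_convMul {φ ψ δ : C →ₗ[R] A} (hδ : IsSkewCoderivation φ ψ δ)
    (hφ : counit ∘ₗ φ = counit) (hψ : counit ∘ₗ ψ = counit) :
    toConv (antipode R ∘ₗ δ) * toConv φ = -(toConv (antipode R ∘ₗ ψ) * toConv δ) := by
  have h := hδ.convMul_comp (antipode R) .id
  rw [antipode_mul_id, LinearMap.convOne_def, ofConv_toConv, comp_assoc,
    hδ.counit_comp_eq_zero hφ hψ, comp_zero, toConv_zero, id_comp, id_comp] at h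
  exact eq_neg_of_add_eq_zero_left h.symm

theorem antipode_comp {φ : C →ₗc[R] A} {ψ δ : C →ₗ[R] A}
    (hδ : IsSkewCoderivation φ.toLinearMap ψ δ) (hψ : counit ∘ₗ ψ = counit) :
    toConv (antipode R ∘ₗ δ) =
      -(toConv (antipode R ∘ₗ ψ) * toConv δ * toConv (antipode R ∘ₗ φ.toLinearMap)) :=
  calc toConv (antipode R ∘ₗ δ)
    _ = toConv (antipode R ∘ₗ δ) * toConv φ.toLinearMap *
          toConv (antipode R ∘ₗ φ.toLinearMap) := by
      rw [mul_assoc, toConv_coalgHom_mul_antipode_comp, mul_one]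
    _ = _ := by rw [hδ.antipode_comp_convMul φ.counit_comp hψ, neg_mul]

end IsSkewCoderivation

theorem r_antipode_delta_formula_general {k C A : Type*} [CommRing k] [AddCommMonoid C]
    [Module k C] [Coalgebra k C] [Ring A] [HopfAlgebra k A] (b : A) {φ : C →ₗc[k] A}
    {ψ δ : C →ₗ[k] A} (hδ : IsSkewCoderivation φ.toLinearMap ψ δ) (hψ : counit ∘ₗ ψ = counit)
    (c : C) :
    b * antipode k (δ c) =
      -mul' k A (rTensor A (mul' k A)
        (map (map (mulLeft k b ∘ₗ antipode k ∘ₗ ψ) δ) (antipode k ∘ₗ φ.toLinearMap)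
          (rTensor C comul (comul c)))) := by
  rw [← convMul_convMul_apply, toConv_mulLeft_comp_convMul, toConv_mulLeft_comp_convMul,
    ofConv_toConv, comp_apply, mulLeft_apply, ← mul_neg]
  exact congr(b * $(hδ.antipode_comp hψ) c)

/-- Let `r` be a grouplike element of a Hopf algebra `A` over a field `k` and
let `δ : A → A` be a `k`-linear map with `Δ(δ a) = δ(a₍₁₎) ⊗ a₍₂₎ + r a₍₁₎ ⊗ δ(a₍₂₎)`.
Then `r S(δ a) = - r S(a₍₁₎) S(r) δ(a₍₂₎) S(a₍₃₎)`, where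
`a₍₁₎ ⊗ a₍₂₎ ⊗ a₍₃₎ = (Δ ⊗ id)(Δ a)`. -/
theorem r_antipode_delta_formula
    {k A : Type*} [Field k] [Ring A] [HopfAlgebra k A]
    (r : A)
    (hr : Coalgebra.comul (R := k) r = r ⊗ₜ[k] r)
    (hrε : Coalgebra.counit (R := k) r = 1)
    (δ : A →ₗ[k] A)
    (hδ : ∀ a : A, Coalgebra.comul (R := k) (δ a) =
      (TensorProduct.map δ (LinearMap.id : A →ₗ[k] A)) (Coalgebra.comul (R := k) a) +
      (TensorProduct.map (LinearMap.mulLeft k r) δ) (Coalgebra.comul (R := k) a))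
    -- `f : a ↦ r * S(a) * S(r)` as a linear map
    (f : A →ₗ[k] A)
    (hf : ∀ a : A, f a = r * HopfAlgebra.antipode (R := k) a *
      HopfAlgebra.antipode (R := k) r) :
    ∀ a : A,
      r * HopfAlgebra.antipode (R := k) (δ a) =
      - (LinearMap.mul' k A) ((LinearMap.rTensor A (LinearMap.mul' k A))
          ((TensorProduct.map (TensorProduct.map f δ) (HopfAlgebra.antipode (R := k)))
            ((LinearMap.rTensor A (Coalgebra.comul (R := k)))
              (Coalgebra.comul (R := k) a)))) := by
  have f_eq : f = mulLeft k r ∘ₗ antipode k ∘ₗ mulLeft k r := by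
    ext a; simp [hf, antipode_mul_antidistrib, mul_assoc]
  exact f_eq ▸ r_antipode_delta_formula_general (φ := .id k A) r hδ (by ext; simp [hrε])
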